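/- The homogeneous coordinate ring of the Grassmannian G(2,n), i.e., ℂ[T_{ij} : 1 ≤ i < j ≤ n] modulo the Plücker ideal, is a unique factorization domain for n ≥ 4. -/

import Mathlib

open MvPolynomial

/-- Index set for the Plücker variables `T_{ij}`, `i < j`. -/
abbrev PIdx (n : ℕ) := {p : Fin n × Fin n // p.1 < p.2}

/-- The variable `T_{ij}`. -/
noncomputable def Tv {K : Type*} [CommRing K] {n : ℕ} (i j : Fin n) (h : i < j) :
    MvPolynomial (PIdx n) K := X ⟨(i, j), h⟩

/-- The Plücker relation `P_{ijkl} = T_{ij}T_{kl} - T_{ik}T_{jl} + T_{il}T_{jk}`. -/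
noncomputable def pluck {K : Type*} [CommRing K] {n : ℕ} (i j k l : Fin n)
    (hij : i < j) (hjk : j < k) (hkl : k < l) : MvPolynomial (PIdx n) K :=
  Tv i j hij * Tv k l hkl - Tv i k (hij.trans hjk) * Tv j l (hjk.trans hkl)
    + Tv i l (hij.trans (hjk.trans hkl)) * Tv j k hjk

/-- The set of all Plücker relations. -/
def pluckerSet (K : Type*) [CommRing K] (n : ℕ) : Set (MvPolynomial (PIdx n) K) :=
  {P | ∃ (i j k l : Fin n) (hij : i < j) (hjk : j < k) (hkl : k < l),
    P = pluck i j k l hij hjk hkl}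

/-!
For each `m`, the monomials in the `T_{ij}` whose index pairs form a chain and satisfy `m ≤ j`
span the quotient by the Plücker relations and the variables `T_{ij}` with `j < m`, since every
other monomial is a multiple of the leading term of one of these generators. Send `T_{ij}` to a
minor of a generic `2 × n` matrix whose second row vanishes in the columns before `m`: the images
of these monomials have distinct leading terms and so are linearly independent. Hence the ideal is
the kernel of a homomorphism to a domain, and is prime. The case `m = 0` is the Plücker ideal. For
`m = 2`, with indices counted from zero, the only added variable is `T_{01}`, which is thus a prime
element of the coordinate ring. Inverting it turns the coordinate ring into a localization of the
polynomial ring in the `T_{0j}` and `T_{1j}`, and Nagata's criterion applies.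
-/

section LeadingMonomials

open MonomialOrder

variable {σ τ R : Type*} [CommRing R]

theorem X_mul_X_eq_monomial (a b : σ) :
    (X a * X b : MvPolynomial σ R) = monomial (Finsupp.single a 1 + Finsupp.single b 1) 1 := by
  simp only [X, monomial_mul, mul_one]

theorem monic_X_mul_X (m : MonomialOrder σ) (a b : σ) :
    m.Monic (X a * X b : MvPolynomial σ R) :=
  (monic_X (R := R)).mul monic_X

theorem degree_X_mul_X [Nontrivial R] (m : MonomialOrder σ) (a b : σ) :
    m.degree (X a * X b : MvPolynomial σ R) = Finsupp.single a 1 + Finsupp.single b 1 := by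
  classical
  rw [X_mul_X_eq_monomial, degree_monomial, if_neg one_ne_zero]

theorem lex_single_add_single_lt [LinearOrder σ] [WellFoundedGT σ] {a c d : σ} (b : σ)
    (hac : a < c) (had : a < d) :
    Finsupp.single c 1 + Finsupp.single d 1 ≺[lex] Finsupp.single a 1 + Finsupp.single b 1 := by
  have hlt : Finsupp.single c 1 + Finsupp.single d 1 ≺[lex] Finsupp.single a 1 := by
    rw [lex_lt_iff, Finsupp.Lex.lt_iff]
    refine ⟨a, fun s hs ↦ ?_, ?_⟩
    · simp [hs.ne, (hs.trans hac).ne, (hs.trans had).ne]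
    · simp [hac.ne, had.ne]
  exact hlt.trans_le (lex.toSyn_monotone le_self_add)

theorem linearIndepOn_of_injOn_degree (m : MonomialOrder σ) {ι : Type*}
    {f : ι → MvPolynomial σ R} {s : Set ι} (hmonic : ∀ i ∈ s, m.Monic (f i))
    (hinj : Set.InjOn (fun i ↦ m.degree (f i)) s) : LinearIndepOn R f s := by
  classical
  rw [linearIndepOn_iff']
  intro t c hts hsum
  by_contra! hne
  obtain ⟨i, hi, hmax⟩ := (t.filter (c · ≠ 0)).exists_max_image
    (fun i ↦ m.toSyn (m.degree (f i))) (by simpa [Finset.Nonempty] using hne)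
  obtain ⟨hit, hci⟩ := Finset.mem_filter.1 hi
  have hcoeff : (∑ j ∈ t, c j • f j).coeff (m.degree (f i)) = c i := by
    rw [coeff_sum, Finset.sum_eq_single_of_mem i hit]
    · rw [coeff_smul, (hmonic i (hts hit)).coeff_degree, smul_eq_mul, mul_one]
    · intro j hjt hji
      rw [coeff_smul, smul_eq_mul]
      by_cases hcj : c j = 0
      · rw [hcj, zero_mul]
      · have hle := hmax j (Finset.mem_filter.2 ⟨hjt, hcj⟩)
        have hdeg : m.degree (f j) ≠ m.degree (f i) := fun h ↦ hji (hinj (hts hjt) (hts hit) h)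
        rw [coeff_eq_zero_of_lt (hle.lt_of_ne (m.toSyn.injective.ne hdeg)), mul_zero]
  exact hci (by rw [← hcoeff, hsum, coeff_zero])

theorem map_monomial_one_eq_prod (φ : MvPolynomial τ R →ₐ[R] MvPolynomial σ R) (d : τ →₀ ℕ) :
    φ (monomial d 1) = ∏ s ∈ d.support, φ (X s) ^ d s := by
  simp only [monomial_eq, C_1, one_mul, Finsupp.prod, map_prod, map_pow]

section Monomial

variable {m : MonomialOrder σ} {φ : MvPolynomial τ R →ₐ[R] MvPolynomial σ R} {d : τ →₀ ℕ}

theorem monic_map_monomial_one (h : ∀ s ∈ d.support, m.Monic (φ (X s))) :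
    m.Monic (φ (monomial d 1)) := by
  rw [map_monomial_one_eq_prod]
  exact Monic.prod fun s hs ↦ (h s hs).pow

theorem degree_map_monomial_one [Nontrivial R] (h : ∀ s ∈ d.support, m.Monic (φ (X s))) :
    m.degree (φ (monomial d 1)) = ∑ s ∈ d.support, d s • m.degree (φ (X s)) := by
  rw [map_monomial_one_eq_prod, degree_prod_of_regular fun s hs ↦ by
    rw [(h s hs).pow.leadingCoeff_eq_one]; exact isRegular_one]
  refine Finset.sum_congr rfl fun s hs ↦ degree_pow_of_pow_leadingCoeff_ne_zero ?_
  rw [(h s hs).leadingCoeff_eq_one, one_pow]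
  exact one_ne_zero

end Monomial

end LeadingMonomials

section Straightening

open MonomialOrder

variable {K : Type*} [CommRing K] {n : ℕ}

/-- The monomial `T^d` is standard if the pairs `(i, j)` in the support of `d` form a chain for the
componentwise order; we also require `m ≤ j`. The standard monomials form a basis of the
coordinate ring of the Schubert variety cut out by `schubertIdeal K n m`. -/
def IsStandard (m : ℕ) (d : PIdx n →₀ ℕ) : Prop :=
  IsChain (· ≤ ·) (d.support : Set (PIdx n)) ∧ ∀ p ∈ d.support, m ≤ p.1.2.val

variable (K n) in
/-- The Plücker relations together with the variables `T_{ij}` with `j < m` in the zero-based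
indexing of `Fin n`. -/
def schubertGenerators (m : ℕ) : Set (MvPolynomial (PIdx n) K) :=
  pluckerSet K n ∪ X '' {p | p.1.2.val < m}

variable (K n) in
/-- The ideal, in the variables `T_{ij}`, of the Schubert variety in `G(2, n)` on which all the
coordinates `T_{ij}` with `j < m` vanish; for `m = 0` it is the Plücker ideal. -/
noncomputable def schubertIdeal (m : ℕ) : Ideal (MvPolynomial (PIdx n) K) :=
  Ideal.span (schubertGenerators K n m)

/-- The linear order on the Plücker variables in which `T_{ij}` precedes `T_{kl}` if `i < k`, or if
`i = k` and `l < j`. -/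
abbrev outerFirst (n : ℕ) : LinearOrder (PIdx n) :=
  LinearOrder.lift' (fun p ↦ toLex (p.1.1, OrderDual.toDual p.1.2)) fun _ _ h ↦
    Subtype.ext (toLex.injective h)

/-- The lexicographic monomial order on the Plücker variables for which earlier variables in
`outerFirst` are larger. It makes the nested product `T_{il}T_{jk}` the leading monomial of a
Plücker relation, so that the generators of each Schubert ideal form a Gröbner basis. -/
noncomputable def pluckerOrder (n : ℕ) : MonomialOrder (PIdx n) :=
  @lex (PIdx n) (outerFirst n) (@Finite.to_wellFoundedGT _ _ (outerFirst n).toPreorder)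

theorem pluckerOrder_single_add_single_lt {p r s : PIdx n} (q : PIdx n)
    (hr : p.1.1 < r.1.1 ∨ p.1.1 = r.1.1 ∧ r.1.2 < p.1.2)
    (hs : p.1.1 < s.1.1 ∨ p.1.1 = s.1.1 ∧ s.1.2 < p.1.2) :
    Finsupp.single r 1 + Finsupp.single s 1 ≺[pluckerOrder n]
      Finsupp.single p 1 + Finsupp.single q 1 :=
  @lex_single_add_single_lt _ (outerFirst n)
    (@Finite.to_wellFoundedGT _ _ (outerFirst n).toPreorder) _ _ _ q (Prod.Lex.toLex_lt_toLex.2 hr)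
    (Prod.Lex.toLex_lt_toLex.2 hs)

section Pluck

variable {i j k l : Fin n} (hij : i < j) (hjk : j < k) (hkl : k < l)

theorem pluck_eq_nested_sub :
    pluck (K := K) i j k l hij hjk hkl =
      Tv i l (hij.trans (hjk.trans hkl)) * Tv j k hjk -
        (Tv i k (hij.trans hjk) * Tv j l (hjk.trans hkl) - Tv i j hij * Tv k l hkl) := by
  rw [pluck]
  ring

variable [Nontrivial K]

theorem degree_crossing_sub_disjoint_lt_degree_nested :
    (pluckerOrder n).degree (Tv (K := K) i k (hij.trans hjk) * Tv j l (hjk.trans hkl) -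
        Tv i j hij * Tv k l hkl) ≺[pluckerOrder n]
      (pluckerOrder n).degree (Tv (K := K) i l (hij.trans (hjk.trans hkl)) * Tv j k hjk) := by
  refine degree_sub_le.trans_lt (max_lt ?_ ?_) <;>
    simp only [Tv, degree_X_mul_X] <;>
    refine pluckerOrder_single_add_single_lt _ ?_ ?_
  all_goals grind

theorem degree_pluck :
    (pluckerOrder n).degree (pluck (K := K) i j k l hij hjk hkl) =
      Finsupp.single ⟨(i, l), hij.trans (hjk.trans hkl)⟩ 1 + Finsupp.single ⟨(j, k), hjk⟩ 1 := by
  rw [pluck_eq_nested_sub, degree_sub_of_lt (degree_crossing_sub_disjoint_lt_degree_nested ..),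
    Tv, Tv, degree_X_mul_X]

theorem monic_pluck : (pluckerOrder n).Monic (pluck (K := K) i j k l hij hjk hkl) := by
  rw [pluck_eq_nested_sub, Monic,
    leadingCoeff_sub_of_lt (degree_crossing_sub_disjoint_lt_degree_nested ..)]
  exact monic_X_mul_X _ _ _

end Pluck

theorem monic_of_mem_schubertGenerators [Nontrivial K] {m : ℕ} {f : MvPolynomial (PIdx n) K}
    (hf : f ∈ schubertGenerators K n m) : (pluckerOrder n).Monic f := by
  obtain ⟨i, j, k, l, hij, hjk, hkl, rfl⟩ | ⟨p, -, rfl⟩ := hf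
  · exact monic_pluck hij hjk hkl
  · exact monic_X

theorem single_add_single_le {σ : Type*} {d : σ →₀ ℕ} {p q : σ} (hp : p ∈ d.support)
    (hq : q ∈ d.support) (hpq : p ≠ q) : Finsupp.single p 1 + Finsupp.single q 1 ≤ d := by
  classical
  rw [Finsupp.mem_support_iff] at hp hq
  intro r
  simp only [Finsupp.add_apply, Finsupp.single_apply]
  grind

theorem isStandard_of_forall_not_degree_le [Nontrivial K] {m : ℕ} {d : PIdx n →₀ ℕ}
    (hd : ∀ f ∈ schubertGenerators K n m, ¬ (pluckerOrder n).degree f ≤ d) : IsStandard m d := by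
  have hnested : ∀ p ∈ d.support, ∀ q ∈ d.support, ¬ (p.1.1 < q.1.1 ∧ q.1.2 < p.1.2) := by
    rintro p hp q hq ⟨hleft, hright⟩
    refine hd _ (Or.inl ⟨p.1.1, q.1.1, q.1.2, p.1.2, hleft, q.2, hright, rfl⟩) ?_
    rw [degree_pluck]
    exact single_add_single_le hp hq fun h ↦ hleft.ne (congrArg (fun p : PIdx n ↦ p.1.1) h)
  refine ⟨fun p hp q hq _ ↦ ?_, fun p hp ↦ ?_⟩
  · have hpq := hnested p hp q hq
    have hqp := hnested q hq p hp
    simp only [← Subtype.coe_le_coe, Prod.le_def]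
    grind
  · by_contra! hlt
    refine hd _ (Or.inr ⟨p, hlt, rfl⟩) ?_
    rw [degree_X]
    simpa [Nat.one_le_iff_ne_zero] using hp

theorem exists_isStandard_sub_mem_schubertIdeal [Nontrivial K] (m : ℕ)
    (f : MvPolynomial (PIdx n) K) :
    ∃ r, (∀ d ∈ r.support, IsStandard m d) ∧ f - r ∈ schubertIdeal K n m := by
  obtain ⟨g, r, rfl, -, hr⟩ := (pluckerOrder n).div_set
    (fun b hb ↦ (monic_of_mem_schubertGenerators (K := K) (m := m) hb).symm ▸ isUnit_one) f
  refine ⟨r, fun d hd ↦ isStandard_of_forall_not_degree_le (hr d hd), ?_⟩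
  rw [add_sub_cancel_right, schubertIdeal, Ideal.span, Finsupp.mem_span_iff_linearCombination]
  exact ⟨g, rfl⟩

end Straightening

section DiagonalExponent

variable {n : ℕ}

/-- The exponent of `∏ x_i y_j` over the pairs `(i, j)` in an exponent vector, which is the
leading monomial of the corresponding product of minors `x_i y_j - x_j y_i`. The variables `x_i`
and `y_j` are indexed by the two summands of `Fin n ⊕ₗ Fin n`. -/
noncomputable def diagonalExponent : (PIdx n →₀ ℕ) →ₗ[ℕ] (Fin n ⊕ₗ Fin n →₀ ℕ) :=
  Finsupp.linearCombination ℕ fun p ↦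
    Finsupp.single (Sum.inlₗ p.1.1) 1 + Finsupp.single (Sum.inrₗ p.1.2) 1

theorem diagonalExponent_apply_ne_zero_iff {d : PIdx n →₀ ℕ} {s : Fin n ⊕ₗ Fin n} :
    diagonalExponent d s ≠ 0 ↔
      ∃ p ∈ d.support, Sum.inlₗ p.1.1 = s ∨ Sum.inrₗ p.1.2 = s := by
  classical
  simp only [diagonalExponent, Finsupp.linearCombination_apply, Finsupp.sum,
    Finsupp.finsetSum_apply, ne_eq, Finset.sum_eq_zero_iff, not_forall]
  refine exists_congr fun p ↦ ?_
  simp only [Finsupp.mem_support_iff, Finsupp.smul_apply, Finsupp.add_apply, Finsupp.single_apply,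
    smul_eq_mul, mul_eq_zero]
  grind

theorem exists_isLeast_diagonalExponent {d : PIdx n →₀ ℕ}
    (hd : IsChain (· ≤ ·) (d.support : Set (PIdx n))) (h0 : d ≠ 0) :
    ∃ p ∈ d.support, IsLeast {i | diagonalExponent d (Sum.inlₗ i) ≠ 0} p.1.1 ∧
      IsLeast {j | diagonalExponent d (Sum.inrₗ j) ≠ 0} p.1.2 := by
  obtain ⟨p, hp⟩ := d.support.exists_minimal (Finsupp.support_nonempty_iff.2 h0)
  have hle : ∀ q ∈ d.support, p ≤ q := fun q hq ↦ (hd.total hp.1 hq).elim id (hp.2 hq)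
  refine ⟨p, hp.1, ⟨?_, ?_⟩, ⟨?_, ?_⟩⟩
  · exact diagonalExponent_apply_ne_zero_iff.2 ⟨p, hp.1, Or.inl rfl⟩
  · intro i hi
    obtain ⟨q, hq, h | h⟩ := diagonalExponent_apply_ne_zero_iff.1 hi
    · exact Sum.inl_injective h ▸ (hle q hq).1
    · cases h
  · exact diagonalExponent_apply_ne_zero_iff.2 ⟨p, hp.1, Or.inr rfl⟩
  · intro j hj
    obtain ⟨q, hq, h | h⟩ := diagonalExponent_apply_ne_zero_iff.1 hj
    · cases h
    · exact Sum.inr_injective h ▸ (hle q hq).2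

theorem eq_zero_of_diagonalExponent_eq_zero {d : PIdx n →₀ ℕ} (h : diagonalExponent d = 0) :
    d = 0 := by
  by_contra h0
  obtain ⟨p, hp⟩ := Finsupp.support_nonempty_iff.2 h0
  exact diagonalExponent_apply_ne_zero_iff.2 ⟨p, hp, Or.inl rfl⟩ (by rw [h, Finsupp.zero_apply])

theorem eq_zero_of_diagonalExponent_eq_of_disjoint {d e : PIdx n →₀ ℕ}
    (hd : IsChain (· ≤ ·) (d.support : Set (PIdx n)))
    (he : IsChain (· ≤ ·) (e.support : Set (PIdx n)))
    (h : diagonalExponent d = diagonalExponent e) (hdisj : Disjoint d.support e.support) :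
    d = 0 := by
  by_contra hd0
  have he0 : e ≠ 0 := by
    rintro rfl
    exact hd0 (eq_zero_of_diagonalExponent_eq_zero (h.trans (map_zero _)))
  obtain ⟨p, hp, hp₁, hp₂⟩ := exists_isLeast_diagonalExponent hd hd0
  obtain ⟨q, hq, hq₁, hq₂⟩ := exists_isLeast_diagonalExponent he he0
  rw [h] at hp₁ hp₂
  have hpq : p = q := Subtype.ext (Prod.ext (hp₁.unique hq₁) (hp₂.unique hq₂))
  exact Finset.disjoint_left.1 hdisj hp (hpq ▸ hq)

theorem injOn_diagonalExponent :
    Set.InjOn diagonalExponent {d : PIdx n →₀ ℕ | IsChain (· ≤ ·) (d.support : Set (PIdx n))} := by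
  intro d hd e he h
  have hd_add : d - d ⊓ e + d ⊓ e = d := tsub_add_cancel_of_le inf_le_left
  have he_add : e - d ⊓ e + d ⊓ e = e := tsub_add_cancel_of_le inf_le_right
  have hsub : diagonalExponent (d - d ⊓ e) = diagonalExponent (e - d ⊓ e) := by
    rwa [← add_left_inj (diagonalExponent (d ⊓ e)), ← map_add, ← map_add, hd_add, he_add]
  have hdisj : Disjoint (d - d ⊓ e).support (e - d ⊓ e).support := by
    refine Finset.disjoint_left.2 fun p hp hq ↦ ?_
    simp only [Finsupp.mem_support_iff, Finsupp.tsub_apply, Finsupp.inf_apply] at hp hq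
    omega
  have hd_chain := hd.mono (Finset.coe_subset.2 (Finsupp.support_mono (tsub_le_self (b := d ⊓ e))))
  have he_chain := he.mono (Finset.coe_subset.2 (Finsupp.support_mono (tsub_le_self (b := d ⊓ e))))
  rw [eq_zero_of_diagonalExponent_eq_of_disjoint hd_chain he_chain hsub hdisj] at hd_add
  rw [eq_zero_of_diagonalExponent_eq_of_disjoint he_chain hd_chain hsub.symm hdisj.symm] at he_add
  exact hd_add.symm.trans he_add

end DiagonalExponent

section Minors

open MonomialOrder

variable {K : Type*} [CommRing K] {n m : ℕ}

section MinorHom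

variable {A : Type*} [CommRing A] [Algebra K A] (x y : Fin n → A)

variable (K) in
/-- The homomorphism sending `T_{ij}` to the minor `x_i y_j - x_j y_i` of the `2 × n` matrix with
rows `x` and `y`. -/
noncomputable def minorHom : MvPolynomial (PIdx n) K →ₐ[K] A :=
  aeval fun p ↦ x p.1.1 * y p.1.2 - x p.1.2 * y p.1.1

theorem minorHom_X (p : PIdx n) :
    minorHom K x y (X p) = x p.1.1 * y p.1.2 - x p.1.2 * y p.1.1 :=
  aeval_X _ _

theorem span_pluckerSet_le_ker_minorHom :
    Ideal.span (pluckerSet K n) ≤ RingHom.ker (minorHom K x y) := by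
  refine Ideal.span_le.2 ?_
  rintro _ ⟨i, j, k, l, hij, hjk, hkl, rfl⟩
  simp only [SetLike.mem_coe, RingHom.mem_ker, pluck, Tv, map_add, map_sub, map_mul, minorHom_X]
  ring

end MinorHom

variable (K n m) in
/-- The homomorphism of `minorHom` for the generic `2 × n` matrix whose second row has been
replaced by `0` in the columns before `m`: the generic point of a Schubert variety. -/
noncomputable def genericMinorHom :
    MvPolynomial (PIdx n) K →ₐ[K] MvPolynomial (Fin n ⊕ₗ Fin n) K :=
  minorHom K (fun i ↦ X (Sum.inlₗ i)) fun j ↦ if j.val < m then 0 else X (Sum.inrₗ j)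

theorem schubertIdeal_le_ker_genericMinorHom :
    schubertIdeal K n m ≤ RingHom.ker (genericMinorHom K n m) := by
  rw [schubertIdeal, schubertGenerators, Ideal.span_union]
  refine sup_le (span_pluckerSet_le_ker_minorHom _ _) (Ideal.span_le.2 ?_)
  rintro _ ⟨p, hp : p.1.2.val < m, rfl⟩
  have hp' : p.1.1.val < m := lt_trans p.2 hp
  simp [genericMinorHom, minorHom_X, hp, hp']

theorem degree_antidiagonal_lt_degree_diagonal [Nontrivial K] {i j : Fin n} (hij : i < j) :
    lex.degree (X (Sum.inlₗ j) * X (Sum.inrₗ i) : MvPolynomial (Fin n ⊕ₗ Fin n) K) ≺[lex]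
      lex.degree (X (Sum.inlₗ i) * X (Sum.inrₗ j) : MvPolynomial (Fin n ⊕ₗ Fin n) K) := by
  rw [degree_X_mul_X, degree_X_mul_X]
  exact lex_single_add_single_lt _ (Sum.Lex.inl_lt_inl_iff.2 hij) (Sum.Lex.inl_lt_inr i i)

theorem monic_genericMinorHom_X [Nontrivial K] {p : PIdx n} (hp : m ≤ p.1.2.val) :
    lex.Monic (genericMinorHom K n m (X p)) := by
  simp only [genericMinorHom, minorHom_X, not_lt.2 hp, if_false]
  split_ifs with hi
  · rw [mul_zero, sub_zero]
    exact monic_X_mul_X _ _ _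
  · rw [Monic, leadingCoeff_sub_of_lt (degree_antidiagonal_lt_degree_diagonal p.2)]
    exact monic_X_mul_X _ _ _

theorem degree_genericMinorHom_X [Nontrivial K] {p : PIdx n} (hp : m ≤ p.1.2.val) :
    lex.degree (genericMinorHom K n m (X p)) =
      Finsupp.single (Sum.inlₗ p.1.1) 1 + Finsupp.single (Sum.inrₗ p.1.2) 1 := by
  simp only [genericMinorHom, minorHom_X, not_lt.2 hp, if_false]
  split_ifs with hi
  · rw [mul_zero, sub_zero, degree_X_mul_X]
  · rw [degree_sub_of_lt (degree_antidiagonal_lt_degree_diagonal p.2), degree_X_mul_X]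

theorem degree_genericMinorHom_monomial_one [Nontrivial K] {d : PIdx n →₀ ℕ}
    (hd : ∀ p ∈ d.support, m ≤ p.1.2.val) :
    lex.degree (genericMinorHom K n m (monomial d 1)) = diagonalExponent d := by
  rw [degree_map_monomial_one fun p hp ↦ monic_genericMinorHom_X (hd p hp), diagonalExponent,
    Finsupp.linearCombination_apply, Finsupp.sum]
  exact Finset.sum_congr rfl fun p hp ↦ by rw [degree_genericMinorHom_X (hd p hp)]

theorem linearIndepOn_genericMinorHom_monomial_one [Nontrivial K] :
    LinearIndepOn K (fun d ↦ genericMinorHom K n m (monomial d 1)) {d | IsStandard m d} := by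
  refine linearIndepOn_of_injOn_degree lex
    (fun d hd ↦ monic_map_monomial_one fun p hp ↦ monic_genericMinorHom_X (hd.2 p hp)) ?_
  refine (injOn_diagonalExponent.mono fun d hd ↦ hd.1).congr fun d hd ↦ ?_
  exact (degree_genericMinorHom_monomial_one hd.2).symm

theorem eq_zero_of_genericMinorHom_eq_zero [Nontrivial K] {f : MvPolynomial (PIdx n) K}
    (hf : ∀ d ∈ f.support, IsStandard m d) (h : genericMinorHom K n m f = 0) : f = 0 := by
  have hsum : ∑ d ∈ f.support, f.coeff d • genericMinorHom K n m (monomial d 1) = 0 := by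
    rw [← h]
    conv_rhs => rw [f.as_sum, map_sum]
    exact Finset.sum_congr rfl fun d _ ↦ by
      rw [← map_smul, smul_monomial, smul_eq_mul, mul_one]
  have hcoeff := linearIndepOn_iff'.1 linearIndepOn_genericMinorHom_monomial_one
    f.support f.coeff hf hsum
  exact support_eq_empty.1 (Finset.eq_empty_of_forall_notMem fun d hd ↦
    mem_support_iff.1 hd (hcoeff d hd))

variable (K n m) in
theorem ker_genericMinorHom : RingHom.ker (genericMinorHom K n m) = schubertIdeal K n m := by
  cases subsingleton_or_nontrivial K
  · exact Subsingleton.elim _ _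
  refine le_antisymm (fun f hf ↦ ?_) schubertIdeal_le_ker_genericMinorHom
  obtain ⟨r, hr, hfr⟩ := exists_isStandard_sub_mem_schubertIdeal m f
  have hmap : genericMinorHom K n m f = genericMinorHom K n m r :=
    sub_eq_zero.1 (by rw [← map_sub]; exact schubertIdeal_le_ker_genericMinorHom hfr)
  have hr0 : r = 0 := eq_zero_of_genericMinorHom_eq_zero hr (hmap.symm.trans hf)
  rwa [hr0, sub_zero] at hfr

variable (K n m) in
theorem isPrime_schubertIdeal [IsDomain K] : (schubertIdeal K n m).IsPrime :=
  ker_genericMinorHom K n m ▸ RingHom.ker_isPrime _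

end Minors

section Nagata

theorem uniqueFactorizationMonoid_of_exists_pow_mul_eq {B R : Type*} [CommRing B] [IsDomain B]
    [UniqueFactorizationMonoid B] [CommRing R] [IsDomain R] [IsNoetherianRing R] {f : B →+* R}
    (hf : Function.Injective f) {b : B} (hb : Prime (f b)) (h : ∀ r, ∃ m c, f b ^ m * r = f c) :
    UniqueFactorizationMonoid R := by
  let L := Localization.Away (f b)
  let _ : Algebra B L := ((algebraMap R L).comp f).toAlgebra
  have hinj : Function.Injective (algebraMap B L) :=
    (IsLocalization.injective L (powers_le_nonZeroDivisors_of_noZeroDivisors hb.ne_zero)).comp hf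
  have hloc : IsLocalization.Away b L := by
    refine .mk b (IsLocalization.Away.algebraMap_isUnit (f b)) (fun z ↦ ?_) fun x y hxy ↦
      ⟨0, by rw [hinj hxy]⟩
    obtain ⟨k, r, hr⟩ := IsLocalization.Away.surj (f b) z
    obtain ⟨m, c, hc⟩ := h r
    refine ⟨k + m, c, ?_⟩
    calc z * algebraMap R L (f b) ^ (k + m)
        = algebraMap R L (f b) ^ m * (z * algebraMap R L (f b) ^ k) := by ring
      _ = algebraMap R L (f c) := by rw [hr, ← hc, map_mul, map_pow]
  exact (UniqueFactorizationMonoid.iff_of_isLocalizationAway_of_prime hb L).2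
    (UniqueFactorizationMonoid.of_isLocalization (Submonoid.powers b) L)

end Nagata

section PluckerAlgebra

variable {K : Type*} [CommRing K] {n : ℕ}

variable (K n) in
/-- The homogeneous coordinate ring of the Grassmannian `G(2, n)` over `K`. -/
abbrev PluckerAlgebra : Type _ := MvPolynomial (PIdx n) K ⧸ Ideal.span (pluckerSet K n)

variable (K) in
/-- The class of the variable `T_{ij}` in the coordinate ring of the Grassmannian. -/
noncomputable def pluckerCoord (p : PIdx n) : PluckerAlgebra K n :=
  Ideal.Quotient.mk _ (X p)

theorem pluckerCoord_mul_pluckerCoord {i j k l : Fin n} (hij : i < j) (hjk : j < k) (hkl : k < l) :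
    pluckerCoord K ⟨(i, j), hij⟩ * pluckerCoord K ⟨(k, l), hkl⟩ =
      pluckerCoord K ⟨(i, k), hij.trans hjk⟩ * pluckerCoord K ⟨(j, l), hjk.trans hkl⟩ -
        pluckerCoord K ⟨(i, l), hij.trans (hjk.trans hkl)⟩ * pluckerCoord K ⟨(j, k), hjk⟩ := by
  have hrel : (Ideal.Quotient.mk (Ideal.span (pluckerSet K n))) (pluck i j k l hij hjk hkl) = 0 :=
    Ideal.Quotient.eq_zero_iff_mem.2 (Ideal.subset_span ⟨i, j, k, l, hij, hjk, hkl, rfl⟩)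
  simp only [pluck, Tv, map_add, map_sub, map_mul] at hrel
  simp only [pluckerCoord]
  linear_combination hrel

variable (K n) in
theorem adjoin_range_pluckerCoord :
    Algebra.adjoin K (Set.range (pluckerCoord K : PIdx n → PluckerAlgebra K n)) = ⊤ := by
  have hrange : Set.range (pluckerCoord K : PIdx n → PluckerAlgebra K n) =
      Ideal.Quotient.mkₐ K (Ideal.span (pluckerSet K n)) '' Set.range X :=
    Set.range_comp _ _
  rw [hrange, ← AlgHom.map_adjoin, adjoin_range_X, Algebra.map_top]
  exact (AlgHom.range_eq_top _).2 (Ideal.Quotient.mkₐ_surjective K _)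

variable (K n) in
theorem schubertIdeal_zero : schubertIdeal K n 0 = Ideal.span (pluckerSet K n) := by
  simp [schubertIdeal, schubertGenerators]

variable (K n) in
theorem schubertIdeal_two :
    schubertIdeal K (n + 2) 2 =
      Ideal.span (pluckerSet K (n + 2)) ⊔ Ideal.span {X ⟨(0, 1), Fin.zero_lt_one⟩} := by
  have hset : {p : PIdx (n + 2) | p.1.2.val < 2} = {⟨(0, 1), Fin.zero_lt_one⟩} := by
    ext ⟨⟨i, j⟩, hij⟩
    simp only [Set.mem_ofPred_eq, Set.mem_singleton_iff, Subtype.mk.injEq, Prod.mk.injEq,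
      Fin.ext_iff, Fin.val_zero, Fin.val_one, Fin.lt_def] at hij ⊢
    omega
  rw [schubertIdeal, schubertGenerators, Ideal.span_union, hset, Set.image_singleton]

instance isDomain_pluckerAlgebra [IsDomain K] : IsDomain (PluckerAlgebra K n) :=
  (Ideal.Quotient.isDomain_iff_prime _).2 (schubertIdeal_zero K n ▸ isPrime_schubertIdeal K n 0)

/-- The indices `(0, j)` and `(1, j)` of the first two rows of Plücker coordinates. -/
def firstRows : Fin (n + 1) ⊕ Fin n → PIdx (n + 2) :=
  Sum.elim (fun j ↦ ⟨(0, j.succ), j.succ_pos⟩)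
    fun j ↦ ⟨(1, j.succ.succ), Fin.succ_lt_succ_iff.2 j.succ_pos⟩

variable (K n) in
/-- The polynomials in the coordinates `T_{0j}` and `T_{1j}`, a subring of the Plücker algebra
with which it agrees after inverting `T_{01}`. -/
noncomputable def firstRowsHom :
    MvPolynomial (Fin (n + 1) ⊕ Fin n) K →ₐ[K] PluckerAlgebra K (n + 2) :=
  aeval (pluckerCoord K ∘ firstRows)

theorem firstRowsHom_X (s : Fin (n + 1) ⊕ Fin n) :
    firstRowsHom K n (X s) = pluckerCoord K (firstRows s) :=
  aeval_X _ _

variable (K n) in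
theorem firstRowsHom_X_inl_zero :
    firstRowsHom K n (X (.inl 0)) = pluckerCoord K ⟨(0, 1), Fin.zero_lt_one⟩ :=
  firstRowsHom_X _

theorem pluckerCoord_firstRows_mem_range (s : Fin (n + 1) ⊕ Fin n) :
    pluckerCoord K (firstRows s) ∈ (firstRowsHom K n).range :=
  ⟨X s, firstRowsHom_X s⟩

theorem exists_minor_firstRows_eq {A : Type*} [CommRing A] {u : Fin (n + 1) → A}
    (hu : IsUnit (u 0)) (v : Fin n → A) :
    ∃ x y : Fin (n + 2) → A, ∀ s,
      x (firstRows s).1.1 * y (firstRows s).1.2 - x (firstRows s).1.2 * y (firstRows s).1.1 =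
        Sum.elim u v s := by
  obtain ⟨w, hw⟩ := hu.exists_right_inv
  refine ⟨Fin.cons 1 (Fin.cons 0 fun j ↦ -(w * v j)), Fin.cons 0 u, ?_⟩
  rintro (j | j)
  · simp only [firstRows, Sum.elim_inl, Fin.cons_zero, Fin.cons_succ]
    ring
  · simp only [firstRows, Sum.elim_inr, ← Fin.succ_zero_eq_one, Fin.cons_succ, Fin.cons_zero]
    linear_combination v j * hw

variable (K n) in
theorem firstRowsHom_injective [IsDomain K] : Function.Injective (firstRowsHom K n) := by
  let F := FractionRing (MvPolynomial (Fin (n + 1) ⊕ Fin n) K)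
  have hinj : Function.Injective (algebraMap (MvPolynomial (Fin (n + 1) ⊕ Fin n) K) F) :=
    IsFractionRing.injective _ _
  let t (s : Fin (n + 1) ⊕ Fin n) : F := algebraMap (MvPolynomial _ K) F (X s)
  have ht : IsUnit (t (Sum.inl 0)) := ((map_ne_zero_iff _ hinj).2 (X_ne_zero _)).isUnit
  obtain ⟨x, y, hxy⟩ := exists_minor_firstRows_eq (u := t ∘ Sum.inl) ht (t ∘ Sum.inr)
  let φ : PluckerAlgebra K (n + 2) →ₐ[K] F :=
    Ideal.Quotient.liftₐ _ (minorHom K x y) fun _ h ↦ span_pluckerSet_le_ker_minorHom x y h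
  have hcomp : φ.comp (firstRowsHom K n) = IsScalarTower.toAlgHom K _ F := by
    refine algHom_ext fun s ↦ ?_
    rw [AlgHom.comp_apply, firstRowsHom_X]
    exact (minorHom_X x y _).trans ((hxy s).trans (congrFun (Sum.elim_comp_inl_inr t) s))
  refine Function.Injective.of_comp (f := φ) ?_
  rw [← AlgHom.coe_comp, hcomp]
  exact hinj

theorem pluckerCoord_zero_one_mul_mem_range (p : PIdx (n + 2)) :
    pluckerCoord K ⟨(0, 1), Fin.zero_lt_one⟩ * pluckerCoord K p ∈ (firstRowsHom K n).range := by
  have h₀ (j : Fin (n + 1)) : pluckerCoord K ⟨(0, j.succ), j.succ_pos⟩ ∈ (firstRowsHom K n).range :=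
    pluckerCoord_firstRows_mem_range (.inl j)
  have h₁ (j : Fin n) (h) : pluckerCoord K ⟨(1, j.succ.succ), h⟩ ∈ (firstRowsHom K n).range :=
    pluckerCoord_firstRows_mem_range (.inr j)
  obtain ⟨⟨i, j⟩, hij : i < j⟩ := p
  obtain ⟨j, rfl⟩ := Fin.exists_succ_eq.2 (Fin.ne_zero_of_lt hij)
  cases i using Fin.cases with
  | zero => exact mul_mem (h₀ 0) (h₀ j)
  | succ i =>
    obtain ⟨j, rfl⟩ := Fin.exists_succ_eq.2 (Fin.ne_zero_of_lt (Fin.succ_lt_succ_iff.1 hij))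
    cases i using Fin.cases with
    | zero => exact mul_mem (h₀ 0) (h₁ j _)
    | succ i =>
      rw [pluckerCoord_mul_pluckerCoord Fin.zero_lt_one
        (Fin.succ_lt_succ_iff.2 i.succ_pos) hij]
      exact sub_mem (mul_mem (h₀ _) (h₁ _ _)) (mul_mem (h₀ _) (h₁ _ _))

theorem exists_pluckerCoord_zero_one_pow_mul_eq (r : PluckerAlgebra K (n + 2)) :
    ∃ m c, pluckerCoord K ⟨(0, 1), Fin.zero_lt_one⟩ ^ m * r = firstRowsHom K n c := by
  have hr : r ∈ Algebra.adjoin K (Set.range (pluckerCoord K)) :=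
    adjoin_range_pluckerCoord K (n + 2) ▸ Algebra.mem_top
  have hmem : pluckerCoord K ⟨(0, 1), Fin.zero_lt_one⟩ ∈ (firstRowsHom K n).range :=
    ⟨_, firstRowsHom_X_inl_zero K n⟩
  obtain ⟨m, hm⟩ := Algebra.pow_smul_mem_of_smul_subset_of_mem_adjoin
    (pluckerCoord K (n := n + 2) ⟨(0, 1), Fin.zero_lt_one⟩) _ (firstRowsHom K n).range
    (Set.smul_set_subset_iff.2 (Set.forall_mem_range.2 pluckerCoord_zero_one_mul_mem_range)) hr
    hmem
  obtain ⟨c, hc⟩ := hm m le_rfl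
  exact ⟨m, c, hc.symm⟩

theorem prime_pluckerCoord_zero_one [IsDomain K] :
    Prime (pluckerCoord K ⟨((0 : Fin (n + 2)), 1), Fin.zero_lt_one⟩) := by
  have hne : pluckerCoord K ⟨((0 : Fin (n + 2)), 1), Fin.zero_lt_one⟩ ≠ 0 :=
    firstRowsHom_X_inl_zero K n ▸
      (map_ne_zero_iff _ (firstRowsHom_injective K n)).2 (X_ne_zero _)
  rw [← Ideal.span_singleton_prime hne]
  have hprime := isPrime_schubertIdeal K (n + 2) 2
  rw [schubertIdeal_two] at hprime
  have hmap := Ideal.isPrime_map_quotientMk_of_isPrime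
    (le_sup_left (a := Ideal.span (pluckerSet K (n + 2)))
      (b := Ideal.span {X ⟨(0, 1), Fin.zero_lt_one⟩}))
  rwa [Ideal.map_sup, Ideal.map_quotient_self, bot_sup_eq, Ideal.map_span, Set.image_singleton]
    at hmap

theorem uniqueFactorizationMonoid_pluckerAlgebra [IsDomain K] [IsNoetherianRing K]
    [UniqueFactorizationMonoid K] (hn : 2 ≤ n) :
    UniqueFactorizationMonoid (PluckerAlgebra K n) := by
  obtain ⟨n, rfl⟩ := Nat.exists_eq_add_of_le' hn
  exact uniqueFactorizationMonoid_of_exists_pow_mul_eq (f := (firstRowsHom K n).toRingHom)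
    (firstRowsHom_injective K n) (b := X (.inl 0))
    (firstRowsHom_X_inl_zero K n ▸ prime_pluckerCoord_zero_one)
    (firstRowsHom_X_inl_zero K n ▸ exists_pluckerCoord_zero_one_pow_mul_eq)

end PluckerAlgebra

theorem stmt_13_general {K : Type*} [CommRing K] [IsDomain K] [IsNoetherianRing K]
    [UniqueFactorizationMonoid K] {n : ℕ} (hn : 2 ≤ n) :
    IsDomain (MvPolynomial (PIdx n) K ⧸ Ideal.span (pluckerSet K n)) ∧
    ∀ (_ : IsDomain (MvPolynomial (PIdx n) K ⧸ Ideal.span (pluckerSet K n))),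
      UniqueFactorizationMonoid (MvPolynomial (PIdx n) K ⧸ Ideal.span (pluckerSet K n)) :=
  ⟨isDomain_pluckerAlgebra, fun _ ↦ uniqueFactorizationMonoid_pluckerAlgebra hn⟩

/-- The homogeneous coordinate ring of the Grassmannian `G(2,n)`, i.e.
`ℂ[T_{ij} : 1 ≤ i < j ≤ n]` modulo the Plücker ideal, is a UFD for `n ≥ 4`. -/
theorem stmt_13 (n : ℕ) (hn : 4 ≤ n) :
    IsDomain (MvPolynomial (PIdx n) ℂ ⧸ Ideal.span (pluckerSet ℂ n)) ∧
    ∀ (_ : IsDomain (MvPolynomial (PIdx n) ℂ ⧸ Ideal.span (pluckerSet ℂ n))),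
      UniqueFactorizationMonoid (MvPolynomial (PIdx n) ℂ ⧸ Ideal.span (pluckerSet ℂ n)) :=
  stmt_13_general (Nat.le_trans (by decide) hn)
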